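/- Let d be a positive integer and let ω(d) denote the number of distinct prime divisors of d. Consider the discriminant quadratic form q_S of the lattice S = ⟨2⟩ ⊕ ⟨-2d⟩, namely the map q_S : ℤ/2ℤ × ℤ/2dℤ → ℚ/2ℤ given on classes of integers (a,b) by q_S(a,b) = a²/2 - b²/(2d) mod 2ℤ. Then the group O(q_S) of additive automorphisms φ of ℤ/2ℤ × ℤ/2dℤ with q_S ∘ φ = q_S has order 2^{1+ω(d)} if d ≡ 3 (mod 4) or 8 divides d, and order 2^{ω(d)} for all other d. -/

import Mathlib

/-- The discriminant quadratic form of the lattice `S = ⟨2⟩ ⊕ ⟨-2d⟩` on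
`A_S = ℤ/2ℤ × ℤ/2dℤ`, with values in `ℚ/2ℤ = AddCircle (2 : ℚ)`:
`q_S(a,b) = a²/2 - b²/(2d) mod 2ℤ`. -/
noncomputable def qS (d : ℕ) (x : ZMod 2 × ZMod (2 * d)) : AddCircle (2 : ℚ) :=
  (((x.1.val : ℚ) ^ 2 / 2 - (x.2.val : ℚ) ^ 2 / (2 * d) : ℚ) : AddCircle (2 : ℚ))

/-!
Sending `b + a√d` to `(a, b)` identifies `A_S` with the ring `ℤ[√d] / (2√d)`, and under this
identification `q_S` is `-N / (2d)`, where `N` is the norm. Multiplication by a class of norm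
`≡ 1 (mod 4d)` therefore preserves `q_S`. Conversely an isometry fixing the class of `1` preserves
both the norm and, by polarization, the real part, hence is the identity; so isometries correspond
to norm-one classes `t + s√d`, where `s ∈ {0, 1}`.

If `s = 0`, then `t` is odd, and `(1 - 2e)² ≡ 1 (mod 4d)` says that `e` is idempotent modulo `d`,
which leaves `2 ^ ω(d)` classes. Modulo `2`, the coefficient `s` is additive on norm-one classes, so
multiplication by any class with `s = 1` exchanges the two values of `s`. Such a class exists if and
only if `1 + d` is a square modulo `4d`.
-/

open Zsqrtd

section Idempotents

theorem isIdempotentElem_zmod_iff_of_isPrimePow {q : ℕ} (hq : IsPrimePow q) {e : ZMod q} :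
    IsIdempotentElem e ↔ e = 0 ∨ e = 1 := by
  refine ⟨fun he ↦ ?_, ?_⟩
  · obtain ⟨a, rfl⟩ := ZMod.intCast_surjective e
    have hcop : Nat.Coprime a.natAbs (1 - a).natAbs :=
      Int.isCoprime_iff_gcd_eq_one.mp ⟨1, 1, by ring⟩
    have hdvd : q ∣ a.natAbs * (1 - a).natAbs := by
      rw [← Int.natAbs_mul, ← Int.natCast_dvd, ← ZMod.intCast_zmod_eq_zero_iff_dvd]
      push_cast
      exact isIdempotentElem_iff_mul_one_sub_self.mp he
    refine ((hcop.isPrimePow_dvd_mul hq).mp hdvd).imp (fun h ↦ ?_) (fun h ↦ ?_)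
    · rwa [ZMod.intCast_zmod_eq_zero_iff_dvd, Int.natCast_dvd]
    · rw [← Int.natCast_dvd, ← ZMod.intCast_zmod_eq_zero_iff_dvd] at h
      push_cast at h
      exact (sub_eq_zero.mp h).symm
  · rintro (rfl | rfl)
    exacts [.zero, .one]

theorem card_isIdempotentElem_prod (R S : Type*) [Mul R] [Mul S] :
    Nat.card {x : R × S // IsIdempotentElem x} =
      Nat.card {x : R // IsIdempotentElem x} * Nat.card {y : S // IsIdempotentElem y} := by
  rw [← Nat.card_prod]
  exact Nat.card_congr <| (Equiv.subtypeEquivRight fun _ ↦ Prod.ext_iff).trans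
    (Equiv.subtypeProdEquivProd (p := IsIdempotentElem) (q := IsIdempotentElem))

theorem card_isIdempotentElem_congr {R S : Type*} [Mul R] [Mul S] (f : R ≃* S) :
    Nat.card {x : R // IsIdempotentElem x} = Nat.card {y : S // IsIdempotentElem y} :=
  Nat.card_congr <| f.toEquiv.subtypeEquiv fun x ↦ by
    simp [IsIdempotentElem, ← map_mul]

theorem card_isIdempotentElem_zmod {n : ℕ} (hn : n ≠ 0) :
    Nat.card {e : ZMod n // IsIdempotentElem e} = 2 ^ n.primeFactors.card := by
  induction n using Nat.recOnPosPrimePosCoprime with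
  | zero => contradiction
  | one => simp [IsIdempotentElem, eq_iff_true_of_subsingleton]
  | prime_pow p k hp hk =>
    have : Fact (1 < p ^ k) := ⟨Nat.one_lt_pow hk.ne' hp.one_lt⟩
    simp only [isIdempotentElem_zmod_iff_of_isPrimePow (hp.isPrimePow.pow hk.ne')]
    rw [Nat.primeFactors_prime_pow hk.ne' hp, Finset.card_singleton, pow_one]
    exact Set.ncard_pair zero_ne_one
  | coprime a b ha hb hab iha ihb =>
    rw [card_isIdempotentElem_congr (ZMod.chineseRemainder hab).toMulEquiv,
      card_isIdempotentElem_prod, iha (by omega), ihb (by omega), hab.primeFactors_mul,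
      Finset.card_union_of_disjoint hab.disjoint_primeFactors, pow_add]

theorem sq_one_sub_two_mul_modEq_one_iff (d : ℕ) (x : ℤ) :
    (1 - 2 * x) ^ 2 ≡ 1 [ZMOD 4 * d] ↔ IsIdempotentElem (x : ZMod d) := by
  have hsq : 1 - (1 - 2 * x) ^ 2 = 4 * (x - x * x) := by ring
  rw [IsIdempotentElem, ← Int.cast_mul, ZMod.intCast_eq_intCast_iff_dvd_sub, Int.modEq_iff_dvd,
    hsq, mul_dvd_mul_iff_left four_ne_zero]

end Idempotents

theorem exists_sq_modEq_one_add_iff (d : ℤ) :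
    (∃ t : ℤ, t ^ 2 ≡ 1 + d [ZMOD 4 * d]) ↔ d % 4 = 3 ∨ 8 ∣ d := by
  constructor
  · rintro ⟨t, ht⟩
    rcases Int.even_or_odd t with ⟨r, rfl⟩ | hodd
    · left
      have h4 : (4 : ℤ) ∣ 1 + d - (r + r) ^ 2 := (dvd_mul_right 4 d).trans ht.dvd
      have : (r + r) ^ 2 = 4 * r ^ 2 := by ring
      omega
    · right
      have hone : 8 ∣ t ^ 2 - 1 := Int.eight_dvd_sq_sub_one_of_odd hodd
      have h4 : (4 : ℤ) ∣ 1 + d - t ^ 2 := (dvd_mul_right 4 d).trans ht.dvd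
      have h8 : (8 : ℤ) ∣ 1 + d - t ^ 2 :=
        (show (8 : ℤ) ∣ 4 * d by omega).trans ht.dvd
      omega
  · rintro (h | ⟨m, rfl⟩)
    · obtain ⟨k, hk⟩ : (4 : ℤ) ∣ 1 + d := by omega
      exact ⟨1 + d, Int.modEq_iff_dvd.mpr ⟨-k, by linear_combination (-d) * hk⟩⟩
    · rcases Int.even_or_odd' m with ⟨k, hk | hk⟩
      · exact ⟨1 + 4 * m, Int.modEq_iff_dvd.mpr ⟨-k, by rw [hk]; ring⟩⟩
      · exact ⟨1 - 4 * m, Int.modEq_iff_dvd.mpr ⟨-k, by rw [hk]; ring⟩⟩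

theorem norm_modEq_re_add_mul_im {d : ℤ} (z : ℤ√d) : z.norm ≡ z.re + d * z.im [ZMOD 2] := by
  rw [Int.modEq_iff_dvd, norm_def]
  obtain ⟨j, hj⟩ := (Int.even_mul_succ_self (z.re - 1)).two_dvd
  obtain ⟨k, hk⟩ := (Int.even_mul_succ_self z.im).two_dvd
  exact ⟨d * k - j, by linear_combination d * hk - hj⟩

theorem im_mul_modEq_add_of_norm_modEq_one {d : ℤ} {u v : ℤ√d} (hu : u.norm ≡ 1 [ZMOD 2])
    (hv : v.norm ≡ 1 [ZMOD 2]) : (u * v).im ≡ u.im + v.im [ZMOD 2] := by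
  obtain ⟨j, hj⟩ := ((norm_modEq_re_add_mul_im u).symm.trans hu).dvd
  obtain ⟨k, hk⟩ := ((norm_modEq_re_add_mul_im v).symm.trans hv).dvd
  rw [Int.modEq_iff_dvd, im_mul]
  exact ⟨v.im * j + u.im * k + d * u.im * v.im, by linear_combination v.im * hj + u.im * hk⟩

/-- The class of `b + a√d` in `A_S`, namely `(a, b)`. It identifies `A_S` with `ℤ[√d] / (2√d)`. -/
def discrClass (d : ℕ) : ℤ√(d : ℤ) →+ ZMod 2 × ZMod (2 * d) :=
  AddMonoidHom.mk' (fun z ↦ (z.im, z.re)) fun z w ↦ by ext <;> simp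

section DiscrClass

variable {d : ℕ}

theorem discrClass_apply (z : ℤ√(d : ℤ)) :
    discrClass d z = ((z.im : ZMod 2), (z.re : ZMod (2 * d))) :=
  rfl

theorem discrClass_surjective (d : ℕ) : Function.Surjective (discrClass d) := by
  rintro ⟨x, y⟩
  obtain ⟨a, rfl⟩ := ZMod.intCast_surjective x
  obtain ⟨b, rfl⟩ := ZMod.intCast_surjective y
  exact ⟨⟨b, a⟩, rfl⟩

theorem discrClass_eq_iff {z w : ℤ√(d : ℤ)} :
    discrClass d z = discrClass d w ↔ z.im ≡ w.im [ZMOD 2] ∧ z.re ≡ w.re [ZMOD 2 * d] := by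
  simp [discrClass_apply, ZMod.intCast_eq_intCast_iff]

theorem discrClass_eq_zero_iff {z : ℤ√(d : ℤ)} : discrClass d z = 0 ↔ 2 * sqrtd ∣ z := by
  have hmul (w : ℤ√(d : ℤ)) : 2 * sqrtd * w = ⟨2 * d * w.im, 2 * w.re⟩ := by
    ext <;> simp [mul_assoc]
  rw [← map_zero (discrClass d), discrClass_eq_iff, im_zero, re_zero, Int.modEq_zero_iff_dvd,
    Int.modEq_zero_iff_dvd]
  constructor
  · rintro ⟨⟨k, hk⟩, ⟨l, hl⟩⟩
    exact ⟨⟨k, l⟩, by rw [hmul]; ext <;> assumption⟩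
  · rintro ⟨w, rfl⟩
    rw [hmul]
    exact ⟨dvd_mul_right _ _, dvd_mul_right _ _⟩

theorem discrClass_one_sub_two_mul_eq_iff {x y : ℤ} :
    discrClass d ⟨1 - 2 * x, 0⟩ = discrClass d ⟨1 - 2 * y, 0⟩ ↔ (x : ZMod d) = y := by
  have hsub : 1 - 2 * y - (1 - 2 * x) = -(2 * (y - x)) := by ring
  rw [discrClass_eq_iff, ZMod.intCast_eq_intCast_iff_dvd_sub, Int.modEq_iff_dvd (n := 2 * (d : ℤ)),
    hsub, dvd_neg, mul_dvd_mul_iff_left two_ne_zero]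
  exact and_iff_right rfl

/-- The endomorphism of `A_S = ℤ[√d] / (2√d)` given by multiplication by the class of `u`. -/
noncomputable def discrMul (u : ℤ√(d : ℤ)) :
    ZMod 2 × ZMod (2 * d) →+ ZMod 2 × ZMod (2 * d) :=
  (discrClass d).liftOfSurjective (discrClass_surjective d)
    ⟨(discrClass d).comp (AddMonoidHom.mulLeft u), fun _ hz ↦
      discrClass_eq_zero_iff.mpr ((discrClass_eq_zero_iff.mp hz).mul_left u)⟩

theorem discrMul_discrClass (u z : ℤ√(d : ℤ)) :
    discrMul u (discrClass d z) = discrClass d (u * z) :=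
  (discrClass d).liftOfRightInverse_comp_apply _ _ _ z

theorem discrClass_star_mul_mul_of_norm_modEq_one {u : ℤ√(d : ℤ)} (hu : u.norm ≡ 1 [ZMOD 4 * d])
    (z : ℤ√(d : ℤ)) : discrClass d (star u * (u * z)) = discrClass d z := by
  obtain ⟨k, hk⟩ := hu.symm.dvd
  have hfour : (4 * d : ℤ√(d : ℤ)) = 2 * sqrtd * (2 * sqrtd) := by ext <;> simp; ring
  have hnorm : (u * star u : ℤ√(d : ℤ)) = 1 + 2 * sqrtd * (2 * sqrtd) * (k : ℤ√(d : ℤ)) := by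
    rw [← norm_eq_mul_conj, ← hfour, ← sub_eq_iff_eq_add']
    exact_mod_cast congrArg (Int.cast : ℤ → ℤ√(d : ℤ)) hk
  rw [← sub_eq_zero, ← map_sub, discrClass_eq_zero_iff]
  exact ⟨2 * sqrtd * (k : ℤ√(d : ℤ)) * z, by linear_combination z * hnorm⟩

/-- Multiplication by the class of `u` as an automorphism of `A_S`, when `u` has norm `1`
modulo `4d`; its inverse is multiplication by the conjugate. -/
noncomputable def discrMulEquiv (u : ℤ√(d : ℤ)) (hu : u.norm ≡ 1 [ZMOD 4 * d]) :
    (ZMod 2 × ZMod (2 * d)) ≃+ (ZMod 2 × ZMod (2 * d)) where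
  __ := discrMul u
  invFun := discrMul (star u)
  left_inv := (discrClass_surjective d).forall.mpr fun z ↦ by
    simpa [discrMul_discrClass] using discrClass_star_mul_mul_of_norm_modEq_one hu z
  right_inv := (discrClass_surjective d).forall.mpr fun z ↦ by
    have hu' : (star u).norm ≡ 1 [ZMOD 4 * d] := by rwa [norm_conj]
    simpa [discrMul_discrClass] using discrClass_star_mul_mul_of_norm_modEq_one hu' z

theorem discrMulEquiv_discrClass {u : ℤ√(d : ℤ)} (hu : u.norm ≡ 1 [ZMOD 4 * d])
    (z : ℤ√(d : ℤ)) : discrMulEquiv u hu (discrClass d z) = discrClass d (u * z) :=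
  discrMul_discrClass u z

end DiscrClass

theorem exists_val_intCast_eq_add_mul {n : ℕ} [NeZero n] (a : ℤ) :
    ∃ k : ℤ, ((a : ZMod n).val : ℤ) = a + n * k :=
  ⟨-(a / n), by rw [ZMod.val_intCast, Int.emod_def]; ring⟩

section DiscriminantForm

variable {d : ℕ} [NeZero d]

theorem qS_discrClass (z : ℤ√(d : ℤ)) :
    qS d (discrClass d z) = ((-z.norm / (2 * d) : ℚ) : AddCircle (2 : ℚ)) := by
  obtain ⟨j, hj⟩ := exists_val_intCast_eq_add_mul (n := 2) z.im
  obtain ⟨k, hk⟩ := exists_val_intCast_eq_add_mul (n := 2 * d) z.re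
  have hj' : ((z.im : ZMod 2).val : ℚ) = z.im + 2 * j := mod_cast hj
  have hk' : ((z.re : ZMod (2 * d)).val : ℚ) = z.re + 2 * d * k := mod_cast hk
  have hd : (d : ℚ) ≠ 0 := NeZero.ne _
  rw [qS, discrClass_apply, hj', hk', ← sub_eq_zero, ← AddCircle.coe_sub,
    AddCircle.coe_eq_zero_iff, norm_def]
  refine ⟨z.im * j + j ^ 2 - z.re * k - d * k ^ 2, ?_⟩
  push_cast [zsmul_eq_mul]
  field_simp
  ring

theorem qS_discrClass_eq_iff {z w : ℤ√(d : ℤ)} :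
    qS d (discrClass d z) = qS d (discrClass d w) ↔ z.norm ≡ w.norm [ZMOD 4 * d] := by
  have hd : (d : ℚ) ≠ 0 := NeZero.ne _
  rw [qS_discrClass, qS_discrClass, ← sub_eq_zero, ← AddCircle.coe_sub, AddCircle.coe_eq_zero_iff,
    Int.modEq_iff_dvd]
  refine exists_congr fun k ↦ ?_
  rw [zsmul_eq_mul, ← @Int.cast_inj ℚ]
  push_cast
  field_simp
  constructor <;> intro h <;> linarith

theorem qS_discrMulEquiv {u : ℤ√(d : ℤ)} (hu : u.norm ≡ 1 [ZMOD 4 * d])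
    (x : ZMod 2 × ZMod (2 * d)) : qS d (discrMulEquiv u hu x) = qS d x := by
  obtain ⟨z, rfl⟩ := discrClass_surjective d x
  rw [discrMulEquiv_discrClass, qS_discrClass_eq_iff, norm_mul]
  simpa using hu.mul_right z.norm

theorem eq_of_qS_eq_of_qS_add_one_eq {x y : ZMod 2 × ZMod (2 * d)} (h : qS d x = qS d y)
    (hone : qS d (x + discrClass d 1) = qS d (y + discrClass d 1)) : x = y := by
  obtain ⟨z, rfl⟩ := discrClass_surjective d x
  obtain ⟨w, rfl⟩ := discrClass_surjective d y
  have hd : (d : ℤ) ≠ 0 := NeZero.ne _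
  rw [← map_add, ← map_add] at hone
  obtain ⟨m, hm⟩ := (qS_discrClass_eq_iff.mp h).dvd
  obtain ⟨n, hn⟩ := (qS_discrClass_eq_iff.mp hone).dvd
  simp only [norm_def, re_add, im_add, re_one, im_one, add_zero] at hm hn
  -- `N(z + 1) - N(z) = 2 re z + 1` determines `re z`, and then `N(z)` determines `d (im z)²`.
  have hre : w.re = z.re + 2 * d * (n - m) := by linarith
  have him : w.im ^ 2 = z.im ^ 2 + 4 * (z.re * (n - m) + d * (n - m) ^ 2 - m) := by
    apply mul_left_cancel₀ hd
    rw [hre] at hm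
    linear_combination -hm
  rw [discrClass_eq_iff]
  constructor
  · have heven : Even (w.im ^ 2 - z.im ^ 2) := by rw [him]; grind
    rw [Int.modEq_iff_dvd, ← even_iff_two_dvd]
    simpa [Int.even_sub, Int.even_pow] using heven
  · exact Int.modEq_iff_dvd.mpr ⟨n - m, by linarith⟩

/-- Isometries of `q_S` correspond to the vectors on which `q_S` takes the same value as on the
class of `1`, by evaluation at that class. -/
noncomputable def isometryEquivNormOne :
    {φ : (ZMod 2 × ZMod (2 * d)) ≃+ (ZMod 2 × ZMod (2 * d)) // ∀ x, qS d (φ x) = qS d x} ≃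
      {v : ZMod 2 × ZMod (2 * d) // qS d v = qS d (discrClass d 1)} :=
  Equiv.ofBijective (fun φ ↦ ⟨φ.1 (discrClass d 1), φ.2 _⟩) <| by
    constructor
    · rintro ⟨φ, hφ⟩ ⟨ψ, hψ⟩ h
      have hφψ : φ (discrClass d 1) = ψ (discrClass d 1) := congrArg Subtype.val h
      have hψ' (x) : qS d (ψ.symm x) = qS d x := by rw [← hψ, ψ.apply_symm_apply]
      ext1
      refine AddEquiv.ext fun x ↦ ?_
      rw [← ψ.symm_apply_eq]
      refine eq_of_qS_eq_of_qS_add_one_eq (by rw [hψ', hφ]) ?_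
      rw [← hφ (x + _), ← hψ' (φ _), map_add, hφψ, map_add, ψ.symm_apply_apply]
    · rintro ⟨v, hv⟩
      obtain ⟨u, rfl⟩ := discrClass_surjective d v
      have hu : u.norm ≡ 1 [ZMOD 4 * d] := by simpa using qS_discrClass_eq_iff.mp hv
      refine ⟨⟨discrMulEquiv u hu, qS_discrMulEquiv hu⟩, Subtype.ext ?_⟩
      exact (discrMulEquiv_discrClass hu 1).trans (by rw [mul_one])

/-- The classes `t + s√d` of norm `1` modulo `4d` with given `s` modulo `2`. -/
def normOneClasses (d : ℕ) (s : ZMod 2) : Set (ZMod 2 × ZMod (2 * d)) :=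
  {v | qS d v = qS d (discrClass d 1) ∧ v.1 = s}

theorem discrClass_mem_normOneClasses {z : ℤ√(d : ℤ)} {s : ZMod 2} :
    discrClass d z ∈ normOneClasses d s ↔ z.norm ≡ 1 [ZMOD 4 * d] ∧ (z.im : ZMod 2) = s := by
  rw [normOneClasses, Set.mem_ofPred_eq, qS_discrClass_eq_iff, norm_one, discrClass_apply]

theorem mem_normOneClasses_intCast_iff {s : ℤ} {v : ZMod 2 × ZMod (2 * d)} :
    v ∈ normOneClasses d s ↔
      ∃ t : ℤ, t ^ 2 ≡ 1 + d * s ^ 2 [ZMOD 4 * d] ∧ discrClass d ⟨t, s⟩ = v := by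
  have hnorm (t : ℤ) : norm (⟨t, s⟩ : ℤ√(d : ℤ)) ≡ 1 [ZMOD 4 * d] ↔
      t ^ 2 ≡ 1 + d * s ^ 2 [ZMOD 4 * d] := by
    rw [Int.modEq_iff_dvd, Int.modEq_iff_dvd, norm_def]
    ring_nf
  constructor
  · rintro ⟨hv, hs⟩
    obtain ⟨t, ht⟩ := ZMod.intCast_surjective v.2
    have hvt : discrClass d ⟨t, s⟩ = v := Prod.ext hs.symm ht
    refine ⟨t, (hnorm t).mp ?_, hvt⟩
    rwa [← hvt, qS_discrClass_eq_iff, norm_one] at hv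
  · rintro ⟨t, ht, rfl⟩
    exact discrClass_mem_normOneClasses.mpr ⟨(hnorm t).mpr ht, rfl⟩

theorem card_isometry_eq_ncard_normOneClasses_add :
    Nat.card {φ : (ZMod 2 × ZMod (2 * d)) ≃+ (ZMod 2 × ZMod (2 * d)) //
        ∀ x, qS d (φ x) = qS d x} =
      (normOneClasses d 0).ncard + (normOneClasses d 1).ncard := by
  have hdisj : Disjoint (normOneClasses d 0) (normOneClasses d 1) :=
    Set.disjoint_left.mpr fun _ h0 h1 ↦ zero_ne_one (h0.2.symm.trans h1.2)
  have hunion : {v | qS d v = qS d (discrClass d 1)} = normOneClasses d 0 ∪ normOneClasses d 1 := by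
    ext v
    have : v.1 = 0 ∨ v.1 = 1 := by generalize v.1 = s; revert s; decide
    simp only [normOneClasses, Set.mem_union, Set.mem_ofPred_eq]
    tauto
  rw [← Set.ncard_union_eq hdisj, ← hunion]
  exact Nat.card_congr isometryEquivNormOne

theorem ncard_normOneClasses_zero : (normOneClasses d 0).ncard = 2 ^ d.primeFactors.card := by
  let f (e : ZMod d) : ZMod 2 × ZMod (2 * d) := discrClass d ⟨1 - 2 * e.cast, 0⟩
  have hf : Function.Injective f := fun e e' h ↦ by
    simpa using discrClass_one_sub_two_mul_eq_iff.mp h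
  have himage : f '' {e | IsIdempotentElem e} = normOneClasses d 0 := by
    ext v
    rw [← Int.cast_zero, mem_normOneClasses_intCast_iff, zero_pow two_ne_zero, mul_zero, add_zero]
    constructor
    · rintro ⟨e, he, rfl⟩
      refine ⟨_, ?_, rfl⟩
      simpa [sq_one_sub_two_mul_modEq_one_iff] using he
    · rintro ⟨t, ht, rfl⟩
      have hodd : Odd (t ^ 2) := Int.odd_iff.mpr (ht.of_dvd ⟨2 * d, by ring⟩)
      obtain ⟨x, rfl⟩ : ∃ x, t = 1 - 2 * x := by
        obtain ⟨y, rfl⟩ := (Int.odd_pow.mp hodd).resolve_right two_ne_zero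
        exact ⟨-y, by ring⟩
      refine ⟨x, (sq_one_sub_two_mul_modEq_one_iff d x).mp ht, ?_⟩
      exact discrClass_one_sub_two_mul_eq_iff.mpr (ZMod.intCast_zmod_cast _)
  rw [← himage, Set.ncard_image_of_injective _ hf]
  exact card_isIdempotentElem_zmod (NeZero.ne d)

theorem discrMulEquiv_mem_normOneClasses_iff {u : ℤ√(d : ℤ)} (hu : u.norm ≡ 1 [ZMOD 4 * d])
    {s : ZMod 2} {v : ZMod 2 × ZMod (2 * d)} :
    discrMulEquiv u hu v ∈ normOneClasses d (u.im + s) ↔ v ∈ normOneClasses d s := by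
  have htwo : (2 : ℤ) ∣ 4 * d := ⟨2 * d, by ring⟩
  obtain ⟨z, rfl⟩ := discrClass_surjective d v
  simp only [normOneClasses, Set.mem_ofPred_eq, qS_discrMulEquiv]
  refine and_congr_right fun hz ↦ ?_
  rw [qS_discrClass_eq_iff, norm_one] at hz
  have him : ((u * z).im : ZMod 2) = u.im + z.im := mod_cast (ZMod.intCast_eq_intCast_iff _ _ 2).mpr
    (im_mul_modEq_add_of_norm_modEq_one (hu.of_dvd htwo) (hz.of_dvd htwo))
  rw [discrMulEquiv_discrClass, discrClass_apply, discrClass_apply, him, add_right_inj]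

theorem ncard_normOneClasses_eq_of_nonempty {s : ZMod 2} (hs : (normOneClasses d s).Nonempty) :
    (normOneClasses d s).ncard = (normOneClasses d 0).ncard := by
  obtain ⟨v, hv⟩ := hs
  obtain ⟨u, rfl⟩ := discrClass_surjective d v
  obtain ⟨hu, rfl⟩ := discrClass_mem_normOneClasses.mp hv
  refine (Nat.card_congr ((discrMulEquiv u hu).toEquiv.subtypeEquiv fun v ↦ ?_)).symm
  rw [← discrMulEquiv_mem_normOneClasses_iff hu, add_zero]
  rfl

theorem normOneClasses_one_nonempty_iff :
    (normOneClasses d 1).Nonempty ↔ d % 4 = 3 ∨ 8 ∣ d := by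
  have hsq : (normOneClasses d 1).Nonempty ↔ ∃ t : ℤ, t ^ 2 ≡ 1 + d [ZMOD 4 * d] := by
    rw [← Int.cast_one, Set.Nonempty]
    simp only [mem_normOneClasses_intCast_iff, one_pow, mul_one]
    exact ⟨fun ⟨_, t, ht, _⟩ ↦ ⟨t, ht⟩, fun ⟨t, ht⟩ ↦ ⟨_, t, ht, rfl⟩⟩
  rw [hsq, exists_sq_modEq_one_add_iff]
  omega

end DiscriminantForm

/-- The orthogonal group of the discriminant form of `⟨2⟩ ⊕ ⟨-2d⟩` has order
`2^{1+ω(d)}` if `d ≡ 3 (mod 4)` or `8 ∣ d`, and order `2^{ω(d)}` otherwise. -/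
theorem card_orthogonal_group_discriminant_form_two_neg2d (d : ℕ) (hd : 0 < d) :
    Nat.card {φ : (ZMod 2 × ZMod (2 * d)) ≃+ (ZMod 2 × ZMod (2 * d)) //
        ∀ x, qS d (φ x) = qS d x} =
      if d % 4 = 3 ∨ 8 ∣ d then 2 ^ (1 + d.primeFactors.card)
      else 2 ^ d.primeFactors.card := by
  have : NeZero d := ⟨hd.ne'⟩
  rw [card_isometry_eq_ncard_normOneClasses_add]
  split_ifs with h
  · rw [ncard_normOneClasses_eq_of_nonempty (normOneClasses_one_nonempty_iff.mpr h),
      ncard_normOneClasses_zero, pow_add, pow_one, two_mul]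
  · rw [← normOneClasses_one_nonempty_iff, Set.not_nonempty_iff_eq_empty] at h
    rw [h, Set.ncard_empty, add_zero, ncard_normOneClasses_zero]
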